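/- The Mordell–Weil group E(ℚ) of the elliptic curve E over ℚ defined by y² = x³ − 540x − 4752 (LMFDB label 576.e1) is isomorphic, as an abelian group, to ℤ × ℤ/2ℤ. -/

import Mathlib

/-- The elliptic curve over `ℚ` with LMFDB label 576.e1, `y² = x³ − 540x − 4752`. -/
noncomputable def E576e1 : WeierstrassCurve.Affine ℚ :=
  { a₁ := 0, a₂ := 0, a₃ := 0, a₄ := -540, a₆ := -4752 }

theorem group_aux {G : Type*} [AddCommGroup G] [AddGroup.FG G] (T P0 P1 : G)
    (hT : T ≠ 0) (hT2 : (2 : ℕ) • T = 0)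
    (htors : ∀ P : G, IsOfFinAddOrder P → P = 0 ∨ P = T)
    (hP0 : ¬ IsOfFinAddOrder P0)
    (hrep : ∀ P : G, ∃ S : G, P = (2 : ℕ) • S ∨ P = (2 : ℕ) • S + T ∨ P = (2 : ℕ) • S + P0 ∨
      P = (2 : ℕ) • S + P1) :
    Nonempty (G ≃+ ℤ × ZMod 2) := by
  classical
  let N : Submodule ℤ G := Submodule.span ℤ {T}
  have hN : ∀ x : G, x ∈ N ↔ x = 0 ∨ x = T := by
    intro x
    constructor
    · intro hx
      apply htors
      obtain ⟨k, rfl⟩ := Submodule.mem_span_singleton.mp hx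
      rw [isOfFinAddOrder_iff_nsmul_eq_zero]
      refine ⟨2, by norm_num, ?_⟩
      rw [smul_comm, hT2, smul_zero]
    · rintro (rfl | rfl)
      · exact N.zero_mem
      · exact Submodule.mem_span_singleton_self _
  have : Module.Finite ℤ G := Module.Finite.iff_addGroup_fg.mpr inferInstance
  have htf : Module.IsTorsionFree ℤ (G ⧸ N) := by
    rw [Module.isTorsionFree_iff_smul_eq_zero]
    intro r m
    intro h
    by_cases hr : r = 0
    · left; exact hr
    right
    obtain ⟨x, rfl⟩ := Submodule.Quotient.mk_surjective N m
    rw [← Submodule.Quotient.mk_smul, Submodule.Quotient.mk_eq_zero, hN] at h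
    rw [Submodule.Quotient.mk_eq_zero, hN]
    apply htors
    rw [isOfFinAddOrder_iff_zsmul_eq_zero]
    refine ⟨2 * r, by simpa using hr, ?_⟩
    rw [mul_smul]
    rcases h with h | h
    · rw [h, smul_zero]
    · rw [h]; exact_mod_cast hT2
  have hfree : Module.Free ℤ (G ⧸ N) := inferInstance
  let b := Module.finBasis ℤ (G ⧸ N)
  set n := Module.finrank ℤ (G ⧸ N) with hn
  have hn0 : n ≠ 0 := by
    intro h0
    have : Subsingleton (G ⧸ N) := Module.finrank_zero_iff.mp h0
    have h1 : P0 ∈ N := by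
      rw [← Submodule.Quotient.mk_eq_zero]
      exact Subsingleton.elim _ _
    rw [hN] at h1
    apply hP0
    rw [isOfFinAddOrder_iff_nsmul_eq_zero]
    refine ⟨2, by norm_num, ?_⟩
    rcases h1 with h | h
    · rw [h, smul_zero]
    · rw [h, hT2]
  have hn1 : n < 2 := by
    by_contra! h2
    let φ : G → ZMod 2 × ZMod 2 := fun g =>
      ((b.repr (N.mkQ g) ⟨0, by omega⟩ : ℤ), (b.repr (N.mkQ g) ⟨1, by omega⟩ : ℤ))
    have hφs : Function.Surjective φ := by
      rintro ⟨u, v⟩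
      obtain ⟨x, hx⟩ := Submodule.Quotient.mk_surjective N
        ((u.val : ℤ) • b ⟨0, by omega⟩ + (v.val : ℤ) • b ⟨1, by omega⟩)
      refine ⟨x, ?_⟩
      have hx' : N.mkQ x = ((u.val : ℤ) • b ⟨0, by omega⟩ + (v.val : ℤ) • b ⟨1, by omega⟩) := hx
      simp only [φ, hx', map_add, map_smul, Module.Basis.repr_self]
      simp
    have h20 : (2 : ZMod 2) = 0 := rfl
    have hT0 : (Submodule.Quotient.mk T : G ⧸ N) = 0 := by
      rw [Submodule.Quotient.mk_eq_zero, hN]; right; rfl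
    have hφ : ∀ g, φ g ∈ ({0, φ P0, φ P1} : Finset (ZMod 2 × ZMod 2)) := by
      intro g
      obtain ⟨S, h | h | h | h⟩ := hrep g <;> rw [h] <;>
        simp [φ, hT0, two_nsmul, CharTwo.add_self_eq_zero]
    have : (Finset.univ : Finset (ZMod 2 × ZMod 2)) ⊆ {0, φ P0, φ P1} := by
      intro z _
      obtain ⟨g, rfl⟩ := hφs z
      exact hφ g
    have h3 := Finset.card_le_card this
    have h4 : ({0, φ P0, φ P1} : Finset (ZMod 2 × ZMod 2)).card ≤ 3 := Finset.card_le_three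
    have h5 : (Finset.univ : Finset (ZMod 2 × ZMod 2)).card = 4 := rfl
    omega
  have hn' : n = 1 := by omega
  have hgen : ∃ g : G ⧸ N, (∀ x : G ⧸ N, ∃ k : ℤ, x = k • g) ∧ g ≠ 0 := by
    refine ⟨b ⟨0, by omega⟩, fun x => ⟨b.repr x ⟨0, by omega⟩, ?_⟩, b.ne_zero _⟩
    conv_lhs => rw [← b.sum_repr x]
    rw [Finset.sum_eq_single_of_mem ⟨0, by omega⟩ (Finset.mem_univ _)]
    intro i _ hi
    exact absurd (Fin.ext (by simp; omega)) hi
  obtain ⟨g', hg', hg0⟩ := hgen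
  obtain ⟨g, rfl⟩ := Submodule.Quotient.mk_surjective N g'
  let τ : ZMod 2 →+ G := ZMod.lift 2 ⟨(zmultiplesHom G) T, by simpa using (by exact_mod_cast hT2)⟩
  have hτ1 : τ 1 = T := by
    have := ZMod.lift_coe 2 ⟨(zmultiplesHom G) T, by simpa using (by exact_mod_cast hT2)⟩ 1
    simpa using this
  let f : ℤ × ZMod 2 →+ G := AddMonoidHom.coprod (zmultiplesHom G g) τ
  have hf : ∀ k e, f (k, e) = k • g + τ e := by intro k e; simp [f]
  have he : ∀ e : ZMod 2, e = 0 ∨ e = 1 := by decide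
  have hτN : ∀ e, τ e ∈ N := by
    intro e
    rw [hN]
    rcases he e with rfl | rfl
    · left; simp
    · right; exact hτ1
  refine ⟨(AddEquiv.ofBijective f ⟨?_, ?_⟩).symm⟩
  · rw [injective_iff_map_eq_zero]
    rintro ⟨k, e⟩ h
    rw [hf] at h
    have h1 : k • (Submodule.Quotient.mk g : G ⧸ N) = 0 := by
      rw [← Submodule.Quotient.mk_smul, Submodule.Quotient.mk_eq_zero, eq_neg_of_add_eq_zero_left h]
      exact N.neg_mem (hτN e)
    have hk : k = 0 := by
      rcases Module.isTorsionFree_iff_smul_eq_zero.mp htf _ _ h1 with h | h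
      · exact h
      · exact absurd h hg0
    subst hk
    rcases he e with rfl | rfl
    · rfl
    · rw [zero_smul, zero_add, hτ1] at h
      exact absurd h hT
  · intro x
    obtain ⟨k, hk⟩ := hg' (Submodule.Quotient.mk x)
    rw [← Submodule.Quotient.mk_smul, Submodule.Quotient.eq, hN] at hk
    rcases hk with hk | hk
    · exact ⟨(k, 0), by rw [hf, map_zero, add_zero]; exact (sub_eq_zero.mp hk).symm⟩
    · exact ⟨(k, 1), by rw [hf, hτ1, ← hk]; abel⟩

theorem sqclass (a b : ℤ) (X y : ℚ) (hX : X ≠ 0) (h : y ^ 2 = X * (X ^ 2 + a * X + b)) :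
    ∃ (d : ℤ) (r : ℚ), Squarefree d ∧ d ∣ b ∧ X = d * r ^ 2 ∧ r ≠ 0 := by
  set m : ℤ := X.num with hm
  set n : ℤ := (X.den : ℤ) with hn
  have hn0 : n ≠ 0 := by simp [hn]
  have hnq : (n : ℚ) ≠ 0 := by exact_mod_cast hn0
  have hm0 : m ≠ 0 := by simpa [hm] using hX
  have hXe : X = m / n := by simp [hm, hn, Rat.num_div_den]
  have hcop : IsCoprime m n := by
    rw [Int.isCoprime_iff_gcd_eq_one]
    simpa [Int.gcd, hm, hn] using X.reduced
  -- squarefree part of m * n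
  obtain ⟨d, c, hdc, hd⟩ : ∃ d c : ℤ, m * n = d * c ^ 2 ∧ Squarefree d := by
    obtain ⟨a', b', h1, h2⟩ := Nat.sq_mul_squarefree (m * n).natAbs
    rcases Int.natAbs_eq (m * n) with h3 | h3
    · refine ⟨a', b', ?_, by rwa [Int.squarefree_natCast]⟩
      rw [h3, ← h1]; push_cast; ring
    · refine ⟨-a', b', ?_, ?_⟩
      · rw [h3, ← h1]; push_cast; ring
      · rw [← Int.squarefree_natAbs]; simpa using h2
  have hc0 : c ≠ 0 := by
    rintro rfl
    have : m * n = 0 := by rw [hdc]; ring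
    exact (mul_ne_zero hm0 hn0) this
  have hcq : (c : ℚ) ≠ 0 := by exact_mod_cast hc0
  have hd0 : d ≠ 0 := hd.ne_zero
  set K := m ^ 2 + a * m * n + b * n ^ 2 with hK
  have hKsq : (y * n ^ 2 / c) ^ 2 = ((d * K : ℤ) : ℚ) := by
    have h1 : (y * n ^ 2) ^ 2 = ((m * n * K : ℤ) : ℚ) := by
      rw [mul_pow, h, hXe, hK]; push_cast; field_simp
    rw [div_pow, h1, hdc]; push_cast; field_simp
  obtain ⟨U, hU⟩ : ∃ U : ℤ, U ^ 2 = d * K := by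
    have : IsSquare (((d * K : ℤ)) : ℚ) := ⟨y * n ^ 2 / c, by rw [← hKsq]; ring⟩
    rw [Rat.isSquare_intCast_iff] at this
    obtain ⟨U, hU⟩ := this
    exact ⟨U, by rw [hU]; ring⟩
  have hdU : d ∣ U := (hd.dvd_pow_iff_dvd (n := 2) (by norm_num)).mp (hU ▸ dvd_mul_right d K)
  obtain ⟨V, rfl⟩ := hdU
  have hdK : d ∣ K := ⟨V ^ 2, by
    have : d * K = d * (d * V ^ 2) := by rw [← hU]; ring
    exact mul_left_cancel₀ hd0 this⟩
  have hdmn : d ∣ m * n := ⟨c ^ 2, hdc⟩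
  have hd1 : d ∣ m ^ 2 + b * n ^ 2 := by
    have : m ^ 2 + b * n ^ 2 = K - a * (m * n) := by rw [hK]; ring
    rw [this]; exact dvd_sub hdK (hdmn.mul_left a)
  have hcopdn : IsCoprime d n := by
    rw [Int.isCoprime_iff_gcd_eq_one]
    by_contra hg
    obtain ⟨p, hp, hpg⟩ := Nat.exists_prime_and_dvd hg
    have hpd : (p : ℤ) ∣ d := (Int.natCast_dvd_natCast.mpr hpg).trans (Int.gcd_dvd_left _ _)
    have hpn : (p : ℤ) ∣ n := (Int.natCast_dvd_natCast.mpr hpg).trans (Int.gcd_dvd_right _ _)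
    have hpm : (p : ℤ) ∣ m := by
      have h1 : (p : ℤ) ∣ m ^ 2 := by
        have h2 := hpd.trans hd1
        have h3 : (p : ℤ) ∣ b * n ^ 2 := (hpn.pow two_ne_zero).mul_left b
        exact (dvd_add_left h3).mp h2
      exact (Nat.prime_iff_prime_int.mp hp).dvd_of_dvd_pow h1
    have := hcop.isUnit_of_dvd' hpm hpn
    exact (Nat.prime_iff_prime_int.mp hp).not_isUnit this
  refine ⟨d, c / n, hd, ?_, ?_, by positivity⟩
  · have hdm : d ∣ m := hcopdn.dvd_of_dvd_mul_right hdmn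
    have h2 : d ∣ b * n ^ 2 := (dvd_add_right (hdm.pow two_ne_zero)).mp hd1
    exact (hcopdn.pow_right).dvd_of_dvd_mul_right h2
  · have : (m : ℚ) * n = d * c ^ 2 := by exact_mod_cast hdc
    rw [hXe]; field_simp; linarith

theorem three_dvd_of_sq_eq (M N : ℤ) (h : (3 : ℤ) ∣ M ^ 2 + N ^ 2) : (3 : ℤ) ∣ M ∧ (3 : ℤ) ∣ N := by
  have h1 : ∀ a b : ZMod 3, a ^ 2 + b ^ 2 = 0 → a = 0 ∧ b = 0 := by decide
  have h2 := h1 M N (by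
    have := (ZMod.intCast_zmod_eq_zero_iff_dvd (M ^ 2 + N ^ 2) 3).mpr h
    exact_mod_cast this)
  exact ⟨(ZMod.intCast_zmod_eq_zero_iff_dvd M 3).mp h2.1,
    (ZMod.intCast_zmod_eq_zero_iff_dvd N 3).mp h2.2⟩

theorem three_dvd_sq {N : ℤ} (h : (3 : ℤ) ∣ N ^ 2) : (3 : ℤ) ∣ N :=
  Int.prime_three.dvd_of_dvd_pow h

/-- Clear denominators in a quartic. -/
theorem quartic_int (A B C D : ℤ) (hD : D ≠ 0) (hDs : Squarefree D) (r t : ℚ)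
    (h : A * r ^ 4 + B * r ^ 2 + C = D * t ^ 2) :
    ∃ M e N : ℤ, ¬ ((3 : ℤ) ∣ M ∧ (3 : ℤ) ∣ e) ∧
      A * M ^ 4 + B * M ^ 2 * e ^ 2 + C * e ^ 4 = D * N ^ 2 := by
  set M : ℤ := r.num with hM
  set e : ℤ := (r.den : ℤ) with he
  have he0 : (e : ℚ) ≠ 0 := by simp [he]
  have hre : r = M / e := by simp [hM, he, Rat.num_div_den]
  have hcop : IsCoprime M e := by
    rw [Int.isCoprime_iff_gcd_eq_one]
    simpa [Int.gcd, hM, he] using r.reduced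
  have hDq : (D : ℚ) ≠ 0 := by exact_mod_cast hD
  set Z : ℤ := A * M ^ 4 + B * M ^ 2 * e ^ 2 + C * e ^ 4 with hZ
  have h1 : (Z : ℚ) = D * (t * e ^ 2) ^ 2 := by
    have : (Z : ℚ) = (A * r ^ 4 + B * r ^ 2 + C) * e ^ 4 := by
      rw [hZ, hre]; push_cast; field_simp
    rw [this, h]; ring
  have h2 : IsSquare (((D * Z : ℤ)) : ℚ) := ⟨D * (t * e ^ 2), by push_cast; rw [h1]; ring⟩
  rw [Rat.isSquare_intCast_iff] at h2
  obtain ⟨U, hU⟩ := h2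
  have hDU : D ∣ U := (hDs.dvd_pow_iff_dvd (n := 2) (by norm_num)).mp
    ⟨Z, by rw [hU]; ring⟩
  obtain ⟨N, rfl⟩ := hDU
  refine ⟨M, e, N, ?_, ?_⟩
  · rintro ⟨h3, h4⟩
    exact Int.prime_three.not_isUnit (hcop.isUnit_of_dvd' h3 h4)
  · apply mul_left_cancel₀ hD
    rw [hU]; ring

theorem excl_pattern1 (B C D : ℤ) (hD : D = -1 ∨ D = 2) (hB : 9 ∣ B) (hC : 27 ∣ C) (hC' : ¬ 81 ∣ C)
    (r t : ℚ) (h : (1 : ℤ) * r ^ 4 + B * r ^ 2 + C = D * t ^ 2) : False := by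
  obtain ⟨M, e, N, hMe, h⟩ := quartic_int 1 B C D (by rcases hD with rfl | rfl <;> decide)
    (by
      rcases hD with rfl | rfl
      · exact (isUnit_one.neg).squarefree
      · exact Int.prime_two.squarefree) r t h
  obtain ⟨B, rfl⟩ := hB
  obtain ⟨C, rfl⟩ := hC
  have h1 : (3 : ℤ) ∣ (M ^ 2) ^ 2 + N ^ 2 := by
    rcases hD with rfl | rfl
    · exact ⟨-(3 * B * M ^ 2 * e ^ 2 + 9 * C * e ^ 4), by linarith⟩
    · exact ⟨N ^ 2 -(3 * B * M ^ 2 * e ^ 2 + 9 * C * e ^ 4), by linarith⟩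
  obtain ⟨h2, h3⟩ := three_dvd_of_sq_eq _ _ h1
  obtain ⟨m, rfl⟩ := three_dvd_sq h2
  obtain ⟨n, rfl⟩ := h3
  have h4 : (3 : ℤ) ∣ n := by
    apply three_dvd_sq
    rcases hD with rfl | rfl
    · exact ⟨-(3 * m ^ 4 + 3 * B * m ^ 2 * e ^ 2 + C * e ^ 4), by linarith⟩
    · exact ⟨n ^ 2 - (3 * m ^ 4 + 3 * B * m ^ 2 * e ^ 2 + C * e ^ 4), by linarith⟩
  obtain ⟨k, rfl⟩ := h4
  have h5 : (3 : ℤ) ∣ C * e ^ 4 := ⟨D * k ^ 2 - m ^ 4 - B * m ^ 2 * e ^ 2, by linarith⟩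
  rcases Int.prime_three.dvd_or_dvd h5 with h6 | h6
  · obtain ⟨c, rfl⟩ := h6
    exact hC' ⟨c, by ring⟩
  · exact hMe ⟨dvd_mul_right _ _, Int.prime_three.dvd_of_dvd_pow h6⟩

theorem excl_pattern2 (B C D : ℤ) (hD : D = 3 ∨ D = -6 ∨ D = 6) (hB : 3 ∣ B) (hC : 3 ∣ C)
    (hC' : ¬ 9 ∣ C) (hsign : 9 ∣ C + D)
    (r t : ℚ) (h : (1 : ℤ) * r ^ 4 + B * r ^ 2 + C = D * t ^ 2) : False := by
  obtain ⟨M, e, N, hMe, h⟩ := quartic_int 1 B C D (by rcases hD with rfl | rfl | rfl <;> decide)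
    (by
      have h6 : Squarefree (6 : ℤ) := by
        have : (6 : ℤ) = 2 * 3 := by norm_num
        rw [this]
        exact (squarefree_mul_iff.mpr ⟨by
          exact IsCoprime.isRelPrime ⟨-1, 1, by norm_num⟩,
          Int.prime_two.squarefree, Int.prime_three.squarefree⟩)
      rcases hD with rfl | rfl | rfl
      · exact Int.prime_three.squarefree
      · rw [← Int.squarefree_natAbs] at h6 ⊢; exact h6
      · exact h6) r t h
  obtain ⟨B, rfl⟩ := hB
  obtain ⟨u, hu⟩ := hsign
  obtain ⟨C, rfl⟩ := hC
  obtain ⟨D, rfl⟩ : (3 : ℤ) ∣ D := by rcases hD with rfl | rfl | rfl <;> decide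
  have h1 : (3 : ℤ) ∣ M := by
    apply Int.prime_three.dvd_of_dvd_pow (n := 4)
    exact ⟨D * N ^ 2 - (B * M ^ 2 * e ^ 2 + C * e ^ 4), by linarith⟩
  obtain ⟨m, rfl⟩ := h1
  have hD' : D = 3 * u - C := by linarith
  have h2 : (3 : ℤ) ∣ C * ((e ^ 2) ^ 2 + N ^ 2) := by
    refine ⟨u * N ^ 2 - (9 * m ^ 4 + 3 * B * m ^ 2 * e ^ 2), ?_⟩
    rw [hD'] at h
    linarith
  rcases Int.prime_three.dvd_or_dvd h2 with h3 | h3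
  · obtain ⟨c, rfl⟩ := h3
    exact hC' ⟨c, by ring⟩
  · exact hMe ⟨dvd_mul_right _ _, three_dvd_sq (three_dvd_of_sq_eq _ _ h3).1⟩

theorem squarefree_dvd_cases (d b : ℤ) (hd : Squarefree d) (hb : d ∣ b) (hb' : b ∣ 1728) :
    d = 1 ∨ d = -1 ∨ d = 2 ∨ d = -2 ∨ d = 3 ∨ d = -3 ∨ d = 6 ∨ d = -6 := by
  have h1 : d ∣ 6 ^ 6 := (hb.trans hb').trans (by norm_num)
  have h2 : d ∣ 6 := (hd.dvd_pow_iff_dvd (by norm_num)).mp h1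
  have h3 := Int.le_of_dvd (by norm_num) h2
  have h4 := Int.le_of_dvd (by norm_num) ((neg_dvd).mpr h2)
  have h5 : -6 ≤ d := by linarith
  interval_cases d <;> revert h2 <;> decide

theorem alpha_image (X y : ℚ) (hX : X ≠ 0) (h : y ^ 2 = X * (X ^ 2 - 36 * X - 108)) :
    ∃ r : ℚ, r ≠ 0 ∧ (X = r ^ 2 ∨ X = -3 * r ^ 2 ∨ X = -2 * r ^ 2 ∨ X = 6 * r ^ 2) := by
  obtain ⟨d, r, hd, hdb, rfl, hr⟩ := sqclass (-36) (-108) X y hX (by rw [h]; push_cast; ring)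
  have hcases := squarefree_dvd_cases d (-108) hd hdb (by norm_num)
  refine ⟨r, hr, ?_⟩
  rcases hcases with rfl | rfl | rfl | rfl | rfl | rfl | rfl | rfl
  · left; push_cast; ring
  · exfalso
    refine excl_pattern1 36 (-108) (-1) (by decide) (by decide) (by decide) (by decide) r (y / r) ?_
    rw [div_pow, h]; push_cast; field_simp; ring
  · exfalso
    refine excl_pattern1 (-18) (-27) 2 (by decide) (by decide) (by decide) (by decide) r
      (y / (4 * r)) ?_
    rw [div_pow, h]; push_cast; field_simp; ring
  · right; right; left; push_cast; ring
  · exfalso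
    refine excl_pattern2 (-12) (-12) 3 (by decide) (by decide) (by decide) (by decide)
      (by decide) r (y / (9 * r)) ?_
    rw [div_pow, h]; push_cast; field_simp; ring
  · right; left; push_cast; ring
  · right; right; right; push_cast; ring
  · exfalso
    refine excl_pattern2 6 (-3) (-6) (by decide) (by decide) (by decide) (by decide)
      (by decide) r (y / (36 * r)) ?_
    rw [div_pow, h]; push_cast; field_simp; ring

theorem alpha_image' (X y : ℚ) (hX : X ≠ 0) (h : y ^ 2 = X * (X ^ 2 + 72 * X + 1728)) :
    ∃ r : ℚ, r ≠ 0 ∧ (X = r ^ 2 ∨ X = 3 * r ^ 2) := by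
  have hpos : 0 < X := by
    rcases lt_or_gt_of_ne hX with h1 | h1
    · nlinarith [sq_nonneg y, sq_nonneg (X + 36), mul_pos_of_neg_of_neg h1 h1]
    · exact h1
  obtain ⟨d, r, hd, hdb, rfl, hr⟩ := sqclass 72 1728 X y hX (by rw [h]; push_cast; ring)
  have hcases := squarefree_dvd_cases d 1728 hd hdb (by norm_num)
  have hr2 : 0 < r ^ 2 := by positivity
  have hdpos : (0 : ℚ) < d := by
    by_contra! hc
    nlinarith
  have hdpos : 0 < d := by exact_mod_cast hdpos
  refine ⟨r, hr, ?_⟩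
  rcases hcases with rfl | rfl | rfl | rfl | rfl | rfl | rfl | rfl
  · left; push_cast; ring
  · norm_num at hdpos
  · exfalso
    refine excl_pattern1 36 432 2 (by decide) (by decide) (by decide) (by decide) r
      (y / (4 * r)) ?_
    rw [div_pow, h]; push_cast; field_simp; ring
  · norm_num at hdpos
  · right; push_cast; ring
  · norm_num at hdpos
  · exfalso
    refine excl_pattern2 12 48 6 (by decide) (by decide) (by decide) (by decide)
      (by decide) r (y / (36 * r)) ?_
    rw [div_pow, h]; push_cast; field_simp; ring
  · norm_num at hdpos

namespace E576

open WeierstrassCurve WeierstrassCurve.Affine WeierstrassCurve.Affine.Point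

instance isElliptic : WeierstrassCurve.IsElliptic E576e1 := by
  rw [WeierstrassCurve.isElliptic_iff, isUnit_iff_ne_zero]
  norm_num [E576e1, WeierstrassCurve.Δ, WeierstrassCurve.b₂, WeierstrassCurve.b₄,
    WeierstrassCurve.b₆, WeierstrassCurve.b₈]

theorem equation_iff' (x y : ℚ) : E576e1.Equation x y ↔ y ^ 2 = x ^ 3 - 540 * x - 4752 := by
  rw [WeierstrassCurve.Affine.equation_iff]
  simp only [E576e1]
  constructor <;> intro h <;> linarith

theorem nonsing (x y : ℚ) (h : y ^ 2 = x ^ 3 - 540 * x - 4752) : E576e1.Nonsingular x y :=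
  (WeierstrassCurve.Affine.equation_iff_nonsingular).mp ((equation_iff' x y).mpr h)

theorem eqn {x y : ℚ} (h : E576e1.Nonsingular x y) :
    y ^ 2 = (x + 12) * ((x + 12) ^ 2 - 36 * (x + 12) - 108) := by
  have := (equation_iff' x y).mp h.1
  rw [this]; ring

theorem negY_eq (x y : ℚ) : E576e1.negY x y = -y := by
  simp [WeierstrassCurve.Affine.negY, E576e1]

theorem add_ne {x₁ y₁ x₂ y₂ : ℚ} (h₁ : E576e1.Nonsingular x₁ y₁) (h₂ : E576e1.Nonsingular x₂ y₂)
    (hx : x₁ ≠ x₂) : ∃ (x₃ y₃ ν : ℚ) (h₃ : E576e1.Nonsingular x₃ y₃),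
      some x₁ y₁ h₁ + some x₂ y₂ h₂ = some x₃ y₃ h₃ ∧
      (x₁ + 12) * (x₂ + 12) * (x₃ + 12) = ν ^ 2 ∧
      ν * (x₁ - x₂) = (x₁ + 12) * y₂ - (x₂ + 12) * y₁ := by
  rw [add_of_X_ne hx]
  refine ⟨_, _, ((x₁ + 12) * y₂ - (x₂ + 12) * y₁) / (x₁ - x₂), _, rfl, ?_,
    div_mul_cancel₀ _ (sub_ne_zero.mpr hx)⟩
  rw [slope_of_X_ne hx]
  simp only [WeierstrassCurve.Affine.addX, E576e1]
  have e₁ := eqn h₁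
  have e₂ := eqn h₂
  have hx' : x₁ - x₂ ≠ 0 := sub_ne_zero.mpr hx
  field_simp
  linear_combination (x₁ - x₂) * (x₂ + 12) * e₁ - (x₁ - x₂) * (x₁ + 12) * e₂

theorem two_of_y_zero {x y : ℚ} (h : E576e1.Nonsingular x y) (hy : y = 0) :
    (2 : ℕ) • some x y h = 0 := by
  rw [two_nsmul]
  exact add_self_of_Y_eq (by rw [negY_eq, hy, _root_.neg_zero])

theorem two_of_y_ne {x y : ℚ} (h : E576e1.Nonsingular x y) (hy : y ≠ 0) :
    ∃ (x' y' : ℚ) (h' : E576e1.Nonsingular x' y'), (2 : ℕ) • some x y h = some x' y' h' ∧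
      x' + 12 = (((x + 12) ^ 2 + 108) / (2 * y)) ^ 2 := by
  have hy' : y ≠ E576e1.negY x y := by
    rw [negY_eq]; intro h0; apply hy; linarith
  rw [two_nsmul, add_self_of_Y_ne hy']
  refine ⟨_, _, _, rfl, ?_⟩
  rw [slope_of_Y_ne rfl hy', negY_eq]
  simp only [WeierstrassCurve.Affine.addX, E576e1]
  have e := eqn h
  have : y - -y = 2 * y := by ring
  rw [this]
  field_simp
  rw [e]
  ring

/-- If `x + 12` is a nonzero square then the point is divisible by two. -/
theorem halving {x y r : ℚ} (h : E576e1.Nonsingular x y) (hr : r ≠ 0) (hx : x + 12 = r ^ 2) :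
    ∃ S : E576e1.Point, some x y h = (2 : ℕ) • S := by
  have e := eqn h
  rw [hx] at e
  set s := y / r with hs
  have es : s ^ 2 = (r ^ 2 - 18) ^ 2 - 432 := by
    rw [hs, div_pow, e]; field_simp; ring
  -- it is enough to find a square
  have key : ∀ w : ℚ, w ≠ 0 → w ^ 4 + 72 * w ^ 2 + 1728 = (2 * r * w) ^ 2 →
      ∃ S : E576e1.Point, some x y h = (2 : ℕ) • S := by
    intro w hw hw2
    set X := (w ^ 2 + 36 + 2 * r * w) / 2 with hX
    have hX1 : X * (X - (w ^ 2 + 36)) = 108 := by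
      rw [hX]; linear_combination (-1 / 4) * hw2
    have hX0 : X ≠ 0 := by intro h0; rw [h0] at hX1; norm_num at hX1
    have hSeq : (w * X) ^ 2 = (X - 12) ^ 3 - 540 * (X - 12) - 4752 := by
      linear_combination (-X) * hX1
    obtain ⟨x', y', h', h2, hx'⟩ := two_of_y_ne (nonsing _ _ hSeq) (mul_ne_zero hw hX0)
    have hr' : (X - 12 + 12) ^ 2 + 108 = r * (2 * (w * X)) := by
      rw [← hX1, hX]; ring
    rw [hr', mul_div_cancel_right₀ _ (by positivity), ← hx] at hx'
    have hxx : x = x' := by linarith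
    rcases (X_eq_iff (h₁ := h) (h₂ := h')).mp hxx with h3 | h3
    · exact ⟨_, h3.trans h2.symm⟩
    · refine ⟨-(some _ _ (nonsing _ _ hSeq)), ?_⟩
      rw [h3, ← h2, neg_nsmul]
  have hAB : (r ^ 2 - 18 + s) * (r ^ 2 - 18 - s) = 432 := by linear_combination (-1) * es
  set A := r ^ 2 - 18 + s with hA
  have hA0 : A ≠ 0 := by intro h0; rw [h0] at hAB; norm_num at hAB
  have h1 : (2 * r * (2 * A)) ^ 2 = (2 * A) * ((2 * A) ^ 2 + 72 * (2 * A) + 1728) := by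
    have : 1728 = 4 * (A * (r ^ 2 - 18 - s)) := by rw [hAB]; norm_num
    rw [this, hA]; ring
  obtain ⟨q, hq, h2 | h2⟩ := alpha_image' (2 * A) _ (by positivity) h1
  · apply key q hq
    rw [h2] at h1
    apply mul_left_cancel₀ (pow_ne_zero 2 hq)
    linear_combination -h1
  · apply key (24 / q) (by positivity)
    rw [h2] at h1
    field_simp
    have := mul_left_cancel₀ (b := 4 * r ^ 2 * q ^ 2 * 3) (c := 9 * q ^ 4 + 216 * q ^ 2 + 1728)
      (pow_ne_zero 2 hq) (by linear_combination (1 / 3) * h1)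
    linear_combination (-192) * this

def T : E576e1.Point := some (-12) 0 (nonsing _ _ (by norm_num))
def P0 : E576e1.Point := some (-14) 8 (nonsing _ _ (by norm_num))
def P1 : E576e1.Point := some 42 216 (nonsing _ _ (by norm_num))

theorem T_ne : T ≠ 0 := some_ne_zero _

theorem T_two : (2 : ℕ) • T = 0 := two_of_y_zero _ rfl

theorem T_not_two (S : E576e1.Point) : (2 : ℕ) • S ≠ T := by
  intro hS
  rcases S with _ | ⟨x, y, h⟩
  · rw [← zero_def, nsmul_zero] at hS
    exact T_ne hS.symm
  · by_cases hy : y = 0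
    · rw [two_of_y_zero h hy] at hS
      exact T_ne hS.symm
    · obtain ⟨x', y', h', h2, hx'⟩ := two_of_y_ne h hy
      rw [h2, T] at hS
      injection hS with hx1 hy1
      rw [hx1] at hx'
      have : 0 < (((x + 12) ^ 2 + 108) / (2 * y)) ^ 2 := by positivity
      linarith

/-- Adding a point in the same square class. -/
theorem same_class {x y x₀ y₀ c : ℚ} (h : E576e1.Nonsingular x y) (h₀ : E576e1.Nonsingular x₀ y₀)
    (hc : c ≠ 0) (hx : (x + 12) * (x₀ + 12) = c ^ 2) :
    ∃ S : E576e1.Point, some x y h = (2 : ℕ) • S + some x₀ y₀ h₀ := by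
  by_cases hxx : x = x₀
  · rcases (X_eq_iff (h₁ := h) (h₂ := h₀)).mp hxx with h3 | h3
    · exact ⟨0, by rw [h3]; simp⟩
    · exact ⟨-some x₀ y₀ h₀, by rw [h3, two_nsmul]; abel⟩
  · have hneg : E576e1.Nonsingular x₀ (-y₀) := by
      rw [← negY_eq x₀ y₀]; exact (nonsingular_neg _ _).mpr h₀
    have hn : -some x₀ y₀ h₀ = some x₀ (-y₀) hneg := by
      rw [neg_some]; congr 1; exact negY_eq _ _
    obtain ⟨x₃, y₃, ν, h₃, hadd, hν, hν'⟩ := add_ne h hneg hxx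
    rw [hx] at hν
    have hx₃ : x₃ + 12 = (ν / c) ^ 2 := by rw [div_pow, ← hν]; field_simp
    by_cases hν0 : ν = 0
    · -- then the sum is T
      exfalso
      rw [hν0, zero_mul] at hν'
      have e₁ := eqn h
      have e₂ := eqn h₀
      have hne : (x + 12) * (x₀ + 12) ≠ 0 := by rw [hx]; positivity
      have h5 : (x + 12) ^ 2 * y₀ ^ 2 = (x₀ + 12) ^ 2 * y ^ 2 := by
        have : (x + 12) * y₀ = -((x₀ + 12) * y) := by linear_combination hν'
        linear_combination ((x + 12) * y₀ - (x₀ + 12) * y) * this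
      rw [e₁, e₂] at h5
      have h6 : (x + 12) * (x₀ + 12) * (x - x₀) * ((x + 12) * (x₀ + 12) + 108) = 0 := by
        linear_combination -h5
      have h7 : (x + 12) * (x₀ + 12) + 108 ≠ 0 := by rw [hx]; positivity
      exact (mul_ne_zero (mul_ne_zero hne (sub_ne_zero.mpr hxx)) h7) h6
    · obtain ⟨S, hS⟩ := halving h₃ (div_ne_zero hν0 hc) hx₃
      refine ⟨S, ?_⟩
      rw [← hS, ← hadd, ← hn]; abel

theorem reps (P : E576e1.Point) : ∃ S : E576e1.Point, P = (2 : ℕ) • S ∨ P = (2 : ℕ) • S + T ∨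
    P = (2 : ℕ) • S + P0 ∨ P = (2 : ℕ) • S + P1 := by
  rcases P with _ | ⟨x, y, h⟩
  · exact ⟨0, Or.inl (by rw [nsmul_zero]; rfl)⟩
  have e := eqn h
  by_cases hX : x + 12 = 0
  · refine ⟨0, Or.inr (Or.inl ?_)⟩
    rw [hX] at e
    have hy : y = 0 := by
      have : y ^ 2 = 0 := by rw [e]; ring
      simpa using this
    rw [nsmul_zero, zero_add, T]
    congr 1
    linarith
  obtain ⟨r, hr, h1 | h1 | h1 | h1⟩ := alpha_image (x + 12) y hX e
  · obtain ⟨S, hS⟩ := halving h hr h1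
    exact ⟨S, Or.inl hS⟩
  · -- subtract T
    have hx : x ≠ -12 := fun h0 => hX (by rw [h0]; norm_num)
    have hTn : E576e1.Nonsingular (-12) 0 := nonsing _ _ (by norm_num)
    have hTT : T + T = 0 := by rw [← two_nsmul]; exact T_two
    have hsum : ∃ (x₃ y₃ : ℚ) (h₃ : E576e1.Nonsingular x₃ y₃),
        some x y h + some (-12) 0 hTn = some x₃ y₃ h₃ ∧ x₃ + 12 = -108 / (x + 12) := by
      rw [add_of_X_ne hx]
      refine ⟨_, _, _, rfl, ?_⟩
      rw [slope_of_X_ne hx]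
      simp only [WeierstrassCurve.Affine.addX, E576e1]
      have h8 : x - -12 = x + 12 := by ring
      rw [h8]
      field_simp
      linear_combination e
    obtain ⟨x₃, y₃, h₃, hadd, hx₃⟩ := hsum
    have hx₃' : x₃ + 12 = (6 / r) ^ 2 := by
      rw [hx₃, h1]; field_simp; norm_num
    obtain ⟨S, hS⟩ := halving h₃ (div_ne_zero (by norm_num) hr) hx₃'
    refine ⟨S, Or.inr (Or.inl ?_)⟩
    rw [← hS, ← hadd]
    change some x y h = some x y h + T + T
    rw [add_assoc, hTT, add_zero]
  · obtain ⟨S, hS⟩ := same_class (c := 2 * r) h (nonsing (-14) 8 (by norm_num)) (by positivity)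
      (by rw [h1]; ring)
    exact ⟨S, Or.inr (Or.inr (Or.inl hS))⟩
  · obtain ⟨S, hS⟩ := same_class (c := 18 * r) h (nonsing 42 216 (by norm_num)) (by positivity)
      (by rw [h1]; ring)
    exact ⟨S, Or.inr (Or.inr (Or.inr hS))⟩

/-- Points in the kernel of reduction at `2`, with valuation of `x + 12`. -/
def Good (P : E576e1.Point) (k : ℤ) : Prop :=
  ∃ (x y : ℚ) (h : E576e1.Nonsingular x y), P = some x y h ∧ x + 12 ≠ 0 ∧
    padicValRat 2 (x + 12) = k ∧ k < 0

theorem good_ne_zero {P : E576e1.Point} {k : ℤ} (h : Good P k) : P ≠ 0 := by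
  obtain ⟨x, y, h, rfl, _⟩ := h
  exact some_ne_zero _

theorem good_unique {P : E576e1.Point} {k l : ℤ} (h : Good P k) (h' : Good P l) : k = l := by
  obtain ⟨x, y, h, rfl, _, hk, _⟩ := h
  obtain ⟨x', y', h', he, _, hl, _⟩ := h'
  injection he with he1 he2
  rw [← hk, ← hl, he1]

/-- Valuation of a sum of an element and one of larger valuation. -/
theorem val_add {a b : ℚ} (ha : a ≠ 0) (hb : b ≠ 0)
    (h : padicValRat 2 a < padicValRat 2 b) : a + b ≠ 0 ∧ padicValRat 2 (a + b) = padicValRat 2 a := by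
  have hab : a + b ≠ 0 := by
    intro h0
    have : a = -b := by linarith
    rw [this, padicValRat.neg] at h
    exact lt_irrefl _ h
  exact ⟨hab, padicValRat.add_eq_of_lt hab ha hb h⟩

theorem val_108 : padicValRat 2 (108 : ℚ) = 2 := by
  have : (108 : ℚ) = 2 ^ 2 * 27 := by norm_num
  rw [this, padicValRat.mul (by norm_num) (by norm_num), padicValRat.pow]
  have h1 : padicValRat 2 (2 : ℚ) = 1 := padicValRat.self (by norm_num)
  have h2 : padicValRat 2 (27 : ℚ) = 0 := by
    have : ((27 : ℕ) : ℚ) = 27 := by norm_num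
    rw [← this, padicValRat.of_nat]
    have : padicValNat 2 27 = 0 := padicValNat.eq_zero_of_not_dvd (by norm_num)
    rw [this]; rfl
  rw [h1, h2]; norm_num

theorem val_36 : padicValRat 2 (36 : ℚ) = 2 := by
  have : (36 : ℚ) = 2 ^ 2 * 9 := by norm_num
  rw [this, padicValRat.mul (by norm_num) (by norm_num), padicValRat.pow]
  have h1 : padicValRat 2 (2 : ℚ) = 1 := padicValRat.self (by norm_num)
  have h2 : padicValRat 2 (9 : ℚ) = 0 := by
    have : ((9 : ℕ) : ℚ) = 9 := by norm_num
    rw [← this, padicValRat.of_nat]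
    have : padicValNat 2 9 = 0 := padicValNat.eq_zero_of_not_dvd (by norm_num)
    rw [this]; rfl
  rw [h1, h2]; norm_num

theorem two_good {x y : ℚ} (h : E576e1.Nonsingular x y) (hX : x + 12 ≠ 0)
    (hv : padicValRat 2 (x + 12) ≠ 1) :
    ∃ k, Good ((2 : ℕ) • some x y h) k ∧
      (padicValRat 2 (x + 12) < 0 → k = padicValRat 2 (x + 12) - 2) := by
  have e := eqn h
  set X := x + 12 with hXdef
  set v := padicValRat 2 X with hvdef
  have hX2 : X ^ 2 ≠ 0 := by positivity
  have vX2 : padicValRat 2 (X ^ 2) = 2 * v := by rw [padicValRat.pow]; norm_num; rfl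
  have v36X : padicValRat 2 (-36 * X) = 2 + v := by
    rw [padicValRat.mul (by norm_num) hX, padicValRat.neg, val_36]
  have v108 : padicValRat 2 (-108 : ℚ) = 2 := by rw [padicValRat.neg, val_108]
  have h2 : padicValRat 2 (2 : ℚ) = 1 := padicValRat.self (by norm_num)
  have hN0 : X ^ 2 + 108 ≠ 0 := by positivity
  -- valuations of the numerator and of the quadratic factor
  obtain ⟨vN, vq, hvN, hq0, hvq, hfin⟩ : ∃ vN vq : ℤ, padicValRat 2 (X ^ 2 + 108) = vN ∧
      X ^ 2 - 36 * X - 108 ≠ 0 ∧ padicValRat 2 (X ^ 2 - 36 * X - 108) = vq ∧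
      (2 * vN - 2 - v - vq < 0 ∧ (v < 0 → 2 * vN - 2 - v - vq = v - 2)) := by
    have hq : X ^ 2 - 36 * X - 108 = X ^ 2 + (-36 * X) + (-108) := by ring
    have hq' : X ^ 2 - 36 * X - 108 = -108 + (-36 * X) + X ^ 2 := by ring
    rcases lt_or_ge v 1 with h1 | h1
    · have a1 := val_add hX2 (b := 108) (by norm_num) (by rw [vX2, val_108]; omega)
      have a2 := val_add hX2 (b := -36 * X) (by simpa using hX) (by rw [vX2, v36X]; omega)
      have a3 := val_add a2.1 (b := -108) (by norm_num) (by rw [a2.2, vX2, v108]; omega)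
      rw [← hq] at a3
      exact ⟨2 * v, 2 * v, by rw [a1.2, vX2], a3.1, by rw [a3.2, a2.2, vX2], by omega, by omega⟩
    · have h1 : 2 ≤ v := by omega
      have a1 := val_add (a := 108) (by norm_num) hX2 (by rw [vX2, val_108]; omega)
      have a2 := val_add (a := -108) (b := -36 * X) (by norm_num) (by simpa using hX)
        (by rw [v108, v36X]; omega)
      have a3 := val_add a2.1 hX2 (by rw [a2.2, vX2, v108]; omega)
      rw [← hq'] at a3
      rw [add_comm] at a1
      exact ⟨2, 2, by rw [a1.2, val_108], a3.1, by rw [a3.2, a2.2, v108], by omega, by omega⟩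
  have hy2 : y ^ 2 ≠ 0 := by rw [e]; exact mul_ne_zero hX hq0
  have hy : y ≠ 0 := by rintro rfl; simp at hy2
  have vy : 2 * padicValRat 2 y = v + vq := by
    have h9 : padicValRat 2 (y ^ 2) = v + vq := by rw [e, padicValRat.mul hX hq0, hvq]
    rw [padicValRat.pow] at h9
    exact_mod_cast h9
  obtain ⟨x', y', h', hdbl, hx'⟩ := two_of_y_ne h hy
  have hne : ((X ^ 2 + 108) / (2 * y)) ≠ 0 := div_ne_zero hN0 (by positivity)
  have hval : padicValRat 2 (x' + 12) = 2 * vN - 2 - v - vq := by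
    rw [hx', padicValRat.pow, padicValRat.div hN0 (by positivity),
      padicValRat.mul (by norm_num) hy, hvN, h2]
    push_cast
    linarith
  refine ⟨2 * vN - 2 - v - vq, ⟨x', y', h', hdbl, ?_, hval, hfin.1⟩, hfin.2⟩
  rw [hx']; positivity

theorem good_double {P : E576e1.Point} {k : ℤ} (h : Good P k) : Good ((2 : ℕ) • P) (k - 2) := by
  obtain ⟨x, y, h, rfl, hX, hk, hk0⟩ := h
  obtain ⟨l, hl, hl'⟩ := two_good h hX (by omega)
  rw [hk] at hl'
  rw [← hl' hk0]; exact hl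

theorem good_pow {P : E576e1.Point} {k : ℤ} (h : Good P k) (n : ℕ) :
    Good ((2 ^ n : ℕ) • P) (k - 2 * n) := by
  induction n with
  | zero => simpa using h
  | succ n ih =>
    have := good_double ih
    rw [← mul_nsmul, ← pow_succ] at this
    convert this using 1
    push_cast; ring

theorem good_inf {P : E576e1.Point} {k : ℤ} (h : Good P k) : ¬ IsOfFinAddOrder P := by
  intro hfin
  have hf : (AddSubmonoid.multiples P : Set E576e1.Point).Finite := by
    exact hfin.finite_multiples
  have hinj : Function.Injective (fun n : ℕ => (2 ^ n : ℕ) • P) := by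
    intro a b hab
    have h1 := good_pow h a
    have h2 := good_pow h b
    simp only at hab
    rw [← hab] at h2
    have := good_unique h1 h2
    omega
  exact Set.infinite_range_of_injective hinj
    (hf.subset (by rintro _ ⟨n, rfl⟩; exact ⟨2 ^ n, rfl⟩))

theorem four_good (P : E576e1.Point) :
    (2 : ℕ) • P = 0 ∨ ∃ k, Good ((2 : ℕ) • ((2 : ℕ) • P)) k := by
  rcases P with _ | ⟨x, y, h⟩
  · left; rw [← zero_def, nsmul_zero]
  by_cases hy : y = 0
  · left; exact two_of_y_zero h hy
  right
  obtain ⟨x', y', h', hdbl, hx'⟩ := two_of_y_ne h hy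
  have hne : (((x + 12) ^ 2 + 108) / (2 * y)) ≠ 0 := div_ne_zero (by positivity) (by positivity)
  rw [hdbl]
  obtain ⟨k, hk, _⟩ := two_good h' (by rw [hx']; positivity)
    (by rw [hx', padicValRat.pow]; push_cast; omega)
  exact ⟨k, hk⟩

theorem two_torsion {P : E576e1.Point} (h2 : (2 : ℕ) • P = 0) : P = 0 ∨ P = T := by
  rcases P with _ | ⟨x, y, h⟩
  · left; rfl
  right
  by_cases hy : y = 0
  · have e := eqn h
    have hX : x + 12 = 0 := by
      by_contra hX
      have h3 : (x + 12) ^ 2 - 36 * (x + 12) - 108 = 0 := by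
        rw [hy] at e
        have : (x + 12) * ((x + 12) ^ 2 - 36 * (x + 12) - 108) = 0 := by rw [← e]; ring
        exact (mul_eq_zero.mp this).resolve_left hX
      have h4 : IsSquare (3 : ℚ) := ⟨(x - 6) / 12, by linear_combination (-1 / 144) * h3⟩
      have h5 : IsSquare (3 : ℤ) := by
        rw [← Rat.isSquare_intCast_iff]; exact_mod_cast h4
      obtain ⟨z, hz⟩ := h5
      have h6 : z < 2 := by nlinarith
      have h7 : -2 < z := by nlinarith
      interval_cases z <;> omega
    rw [T]
    congr 1
    linarith
  · obtain ⟨x', y', h', hdbl, hx'⟩ := two_of_y_ne h hy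
    rw [hdbl] at h2
    exact absurd h2 (some_ne_zero _)

theorem torsion {P : E576e1.Point} (h : IsOfFinAddOrder P) : P = 0 ∨ P = T := by
  apply two_torsion
  rcases four_good P with h2 | ⟨k, hk⟩
  · exact h2
  · exact absurd (h.nsmul.nsmul) (good_inf hk)

theorem P0_inf : ¬ IsOfFinAddOrder P0 := by
  intro h
  rcases torsion h with h | h
  · exact some_ne_zero _ h
  · rw [P0, T] at h
    injection h with h1 h2
    norm_num at h1

end E576

namespace E576

open WeierstrassCurve WeierstrassCurve.Affine WeierstrassCurve.Affine.Point

/-- The evaluated addition-and-subtraction map. -/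
theorem addSub_eval (s t u : ℚ) :
    (fun i ↦ (addSubMap E576e1 i).eval ![s, t, u]) =
      ![s ^ 2 + 1080 * s * u + 19008 * t * u + 291600 * u ^ 2,
        2 * t * s - 1080 * t * u - 19008 * u ^ 2, t ^ 2 - 4 * s * u] := by
  funext i
  fin_cases i <;>
    simp [addSubMap, E576e1, WeierstrassCurve.b₂, WeierstrassCurve.b₄,
      WeierstrassCurve.b₆, WeierstrassCurve.b₈] <;> ring

theorem addSub_self (P : E576e1.Point) : ∃ c : ℚ, c ≠ 0 ∧
    (fun i ↦ (addSubMap E576e1 i).eval (P.sym2x P)) = c • ((2 : ℕ) • P).sym2x 0 := by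
  rcases P with _ | ⟨x, y, h⟩
  · refine ⟨1, one_ne_zero, ?_⟩
    rw [← zero_def, nsmul_zero, sym2x_zero_zero, addSub_eval]
    simp
  · have e := eqn h
    have hn := addSubMap_ne_zero E576e1 (sym2x_ne_zero (some x y h) (some x y h))
    rw [sym2x_some_some, addSub_eval] at hn ⊢
    have e2 : 2 * (x + x) * (x * x) - 1080 * (x + x) * 1 - 19008 * 1 ^ 2 = 4 * y ^ 2 := by
      rw [e]; ring
    have e3 : (x + x) ^ 2 - 4 * (x * x) * 1 = 0 := by ring
    rw [e2, e3] at hn ⊢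
    by_cases hy : y = 0
    · rw [two_of_y_zero h hy, sym2x_zero_zero]
      refine ⟨(x * x) ^ 2 + 1080 * (x * x) * 1 + 19008 * (x + x) * 1 + 291600 * 1 ^ 2,
        fun h0 => hn ?_, ?_⟩
      · rw [hy, h0]
        simp
      · rw [hy]
        simp
    · obtain ⟨x', y', h', h2, hx'⟩ := two_of_y_ne h hy
      rw [h2, sym2x_some_zero]
      refine ⟨4 * y ^ 2, by positivity, ?_⟩
      have : x' = (((x + 12) ^ 2 + 108) / (2 * y)) ^ 2 - 12 := by linarith
      have h4 : (x * x) ^ 2 + 1080 * (x * x) * 1 + 19008 * (x + x) * 1 + 291600 * 1 ^ 2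
          = 4 * y ^ 2 * x' := by
        rw [this]
        field_simp
        rw [e]
        ring
      rw [h4]
      simp

theorem generic_alg {x₁ x₂ y₁ y₂ x₃ x₄ : ℚ} (hx : x₁ ≠ x₂)
    (e₁ : y₁ ^ 2 = (x₁ + 12) * ((x₁ + 12) ^ 2 - 36 * (x₁ + 12) - 108))
    (e₂ : y₂ ^ 2 = (x₂ + 12) * ((x₂ + 12) ^ 2 - 36 * (x₂ + 12) - 108))
    (h₃ : x₃ = ((y₁ - y₂) / (x₁ - x₂)) ^ 2 - x₁ - x₂)
    (h₄ : x₄ = ((y₁ + y₂) / (x₁ - x₂)) ^ 2 - x₁ - x₂) :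
    ![(x₁ * x₂) ^ 2 + 1080 * (x₁ * x₂) * 1 + 19008 * (x₁ + x₂) * 1 + 291600 * 1 ^ 2,
      2 * (x₁ + x₂) * (x₁ * x₂) - 1080 * (x₁ + x₂) * 1 - 19008 * 1 ^ 2,
      (x₁ + x₂) ^ 2 - 4 * (x₁ * x₂) * 1] = (x₁ - x₂) ^ 2 • ![x₃ * x₄, x₃ + x₄, 1] := by
  have hx' : x₁ - x₂ ≠ 0 := sub_ne_zero.mpr hx
  have k₁ : (x₁ - x₂) ^ 2 * (x₃ * x₄) =
      (x₁ * x₂) ^ 2 + 1080 * (x₁ * x₂) * 1 + 19008 * (x₁ + x₂) * 1 + 291600 * 1 ^ 2 := by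
    have : (x₁ - x₂) ^ 2 * (x₃ * x₄) =
      ((y₁ ^ 2 - y₂ ^ 2) ^ 2 - 2 * (x₁ + x₂) * (x₁ - x₂) ^ 2 * (y₁ ^ 2 + y₂ ^ 2)
        + (x₁ + x₂) ^ 2 * (x₁ - x₂) ^ 4) / (x₁ - x₂) ^ 2 := by
      rw [h₃, h₄]; field_simp; ring
    rw [this, e₁, e₂, div_eq_iff (pow_ne_zero _ hx')]
    ring
  have k₂ : (x₁ - x₂) ^ 2 * (x₃ + x₄) =
      2 * (x₁ + x₂) * (x₁ * x₂) - 1080 * (x₁ + x₂) * 1 - 19008 * 1 ^ 2 := by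
    have : (x₁ - x₂) ^ 2 * (x₃ + x₄) =
        2 * (y₁ ^ 2 + y₂ ^ 2) - 2 * (x₁ + x₂) * (x₁ - x₂) ^ 2 := by
      rw [h₃, h₄]; field_simp; ring
    rw [this, e₁, e₂]
    ring
  have k₃ : (x₁ - x₂) ^ 2 * 1 = (x₁ + x₂) ^ 2 - 4 * (x₁ * x₂) * 1 := by ring
  rw [← k₁, ← k₂, ← k₃]
  simp

theorem addSub_point (P Q : E576e1.Point) : ∃ c : ℚ, c ≠ 0 ∧
    (fun i ↦ (addSubMap E576e1 i).eval (P.sym2x Q)) = c • (P + Q).sym2x (P - Q) := by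
  have hneg : ∀ P : E576e1.Point, ∃ c : ℚ, c ≠ 0 ∧
      (fun i ↦ (addSubMap E576e1 i).eval (P.sym2x 0)) = c • P.sym2x P := by
    intro P
    refine ⟨1, one_ne_zero, ?_⟩
    rcases P with _ | ⟨x, y, h⟩
    · rw [← zero_def, sym2x_zero_zero, addSub_eval]; simp
    · rw [sym2x_some_zero, sym2x_some_some, addSub_eval, one_smul]
      congr 1
      · ring
      · congr 1
        · ring
        · congr 1
          ring
  by_cases hP : P = 0
  · subst hP
    rw [_root_.zero_add, _root_.zero_sub, sym2x_neg_right, sym2x_comm]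
    exact hneg Q
  by_cases hQ : Q = 0
  · subst hQ
    rw [_root_.add_zero, _root_.sub_zero]
    exact hneg P
  by_cases h1 : P = Q
  · subst h1
    rw [_root_.sub_self, ← two_nsmul]
    exact addSub_self P
  by_cases h2 : P = -Q
  · subst h2
    rw [_root_.neg_add_cancel, sym2x_neg_left, ← neg_add', sym2x_neg_right, sym2x_comm 0,
      ← two_nsmul]
    exact addSub_self Q
  rcases P with _ | ⟨x₁, y₁, hp⟩
  · exact absurd rfl hP
  rcases Q with _ | ⟨x₂, y₂, hq⟩
  · exact absurd rfl hQ
  have hx : x₁ ≠ x₂ := by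
    rintro rfl
    have e₁ := eqn hp
    have e₂ := eqn hq
    rw [← e₂] at e₁
    rcases sq_eq_sq_iff_eq_or_eq_neg.mp e₁ with rfl | rfl
    · exact h1 rfl
    · apply h2
      rw [neg_some]
      simp only [negY_eq]
  rw [sub_eq_add_neg, neg_some, add_of_X_ne hx, add_of_X_ne hx, sym2x_some_some, sym2x_some_some,
    addSub_eval]
  refine ⟨(x₁ - x₂) ^ 2, pow_ne_zero _ (sub_ne_zero.mpr hx), ?_⟩
  refine generic_alg hx (eqn hp) (eqn hq) ?_ ?_
  · rw [slope_of_X_ne hx]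
    simp [WeierstrassCurve.Affine.addX, E576e1]
  · rw [slope_of_X_ne hx, negY_eq]
    simp [WeierstrassCurve.Affine.addX, E576e1]

open Height in
/-- The naive height on the curve. -/
noncomputable def ht (P : E576e1.Point) : ℝ := logHeight P.xRep

open Height in
theorem ht_parallelogram : ∃ C : ℝ, ∀ P Q : E576e1.Point,
    |ht (P + Q) + ht (P - Q) - 2 * (ht P + ht Q)| ≤ C := by
  obtain ⟨C₁, h₁⟩ := abs_logHeight_addSubMap_sub_two_mul_logHeight_le E576e1
  obtain ⟨C₂, h₂⟩ := abs_logHeight_sym2_sub_le ℚ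
  have h₃ : ∀ P Q : E576e1.Point, |logHeight (P.sym2x Q) - (ht P + ht Q)| ≤ C₂ := by
    intro P Q
    have hv : ∀ P : E576e1.Point, P.xRep = ![P.xRep 0, P.xRep 1] := by
      intro P; funext i; fin_cases i <;> rfl
    have hP := xRep_ne_zero P
    have hQ := xRep_ne_zero Q
    rw [hv] at hP hQ
    have := h₂ hP hQ
    rw [← hv, ← hv] at this
    exact this
  refine ⟨C₁ + 3 * C₂, fun P Q => ?_⟩
  obtain ⟨c, hc, h⟩ := addSub_point P Q
  have a₁ := h₁ (P.sym2x Q)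
  rw [h, logHeight_smul_eq_logHeight _ hc] at a₁
  have a₂ := h₃ P Q
  have a₃ := h₃ (P + Q) (P - Q)
  rw [abs_le] at *
  constructor <;> linarith [a₁.1, a₁.2, a₂.1, a₂.2, a₃.1, a₃.2]

open Height in
instance ht_northcott : Northcott ht where
  finite_le b := by
    have hf : {x : ℚ | logHeight₁ x ≤ b}.Finite := Northcott.finite_le (h := logHeight₁ (K := ℚ)) b
    have hcov : {P : E576e1.Point | ht P ≤ b} ⊆
        {0} ∪ ⋃ x ∈ {x : ℚ | logHeight₁ x ≤ b}, {P : E576e1.Point | P.xRep = ![x, 1]} := by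
      intro P hP
      rcases P with _ | ⟨x, y, h⟩
      · left; rfl
      · right
        simp only [Set.mem_iUnion]
        refine ⟨x, ?_, xRep_some h⟩
        have hP' : ht (some x y h) ≤ b := hP
        rw [ht, xRep_some] at hP'
        simpa [logHeight₁_eq_logHeight] using hP'
    refine ((Set.finite_singleton _).union (hf.biUnion fun x _ => ?_)).subset hcov
    by_cases hne : ∃ P : E576e1.Point, P.xRep = ![x, 1]
    · obtain ⟨P, hP⟩ := hne
      refine (Set.toFinite {P, -P}).subset fun Q hQ => ?_
      have hQ' : Q.xRep = P.xRep := by rw [hP]; exact hQ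
      exact xRep_eq_xRep_iff.mp hQ'
    · refine (Set.finite_empty).subset fun Q hQ => hne ⟨Q, hQ⟩

theorem finiteIndex : (nsmulAddMonoidHom (α := E576e1.Point) 2).range.FiniteIndex := by
  have hs : Set.range (fun i : Fin 4 => (QuotientAddGroup.mk (![0, T, P0, P1] i) :
      E576e1.Point ⧸ (nsmulAddMonoidHom (α := E576e1.Point) 2).range)) = Set.univ := by
    refine Set.eq_univ_of_forall fun q => ?_
    induction q using QuotientAddGroup.induction_on with
    | H P =>
      have key : ∀ (S R : E576e1.Point), P = (2 : ℕ) • S + R →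
          (QuotientAddGroup.mk R : E576e1.Point ⧸
            (nsmulAddMonoidHom (α := E576e1.Point) 2).range) = QuotientAddGroup.mk P := by
        intro S R h
        rw [QuotientAddGroup.eq]
        refine ⟨S, ?_⟩
        rw [h]
        simp [nsmulAddMonoidHom]
      obtain ⟨S, h | h | h | h⟩ := reps P
      · exact ⟨0, key S 0 (by rw [h, _root_.add_zero])⟩
      · exact ⟨1, key S T h⟩
      · exact ⟨2, key S P0 h⟩
      · exact ⟨3, key S P1 h⟩
  have : Finite (E576e1.Point ⧸ (nsmulAddMonoidHom (α := E576e1.Point) 2).range) := by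
    rw [← Set.finite_univ_iff, ← hs]
    exact Set.finite_range _
  exact AddSubgroup.finiteIndex_of_finite_quotient

theorem fg : AddGroup.FG E576e1.Point := by
  obtain ⟨C, hC⟩ := ht_parallelogram
  exact AddCommGroup.fg_of_descent' (h := ht) finiteIndex (fun P => Height.logHeight_nonneg _) hC

end E576

/-- The Mordell–Weil group `E(ℚ)` of the elliptic curve
`y² = x³ − 540x − 4752` over `ℚ` (LMFDB 576.e1) is isomorphic as an abelian group to
`ℤ × ℤ/2ℤ`. -/
theorem mordellWeil_576e1 : Nonempty (E576e1.Point ≃+ ℤ × ZMod 2) := by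
  have := E576.fg
  exact group_aux E576.T E576.P0 E576.P1 E576.T_ne E576.T_two (fun _ => E576.torsion)
    E576.P0_inf E576.reps
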